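/- arXiv:2003.05524 — 5 statements merged into one kernel-verified Lean document; each statement's English description precedes it below -/
import Mathlib

section
/- Fix n : ℕ and 0 ≤ k ≤ n. For θ ∈ ℝ let D_θ be the diagonal matrix indexed by bit strings (Fin n → Fin 2) with entry exp(i·θ·Σ_j (-1)^(x j)) at x (this is the n-fold tensor power of e^{iθZ}), and for 0 ≤ v ≤ n let ξ_v : ℝ → ℂ be the function ξ_v θ := (cos θ)^(n-v) · (i · sin θ)^v. Then the real span, inside the space of functions ℝ → ℂ, of the set {fun θ => Tr(A * D_θ) : A Hermitian, k-local, U(1)-invariant} is equal to the real span of {ξ_v : 0 ≤ v ≤ k}, and this subspace has real dimension k + 1. -/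
/-! STATEMENT 13: The real span of the character functions `θ ↦ Tr(A·D_θ)` of Hermitian
`k`-local U(1)-invariant matrices equals the real span of `ξ_v` for `0 ≤ v ≤ k`, a subspace
of real dimension `k+1`. -/

open Matrix

noncomputable section

/-- Pauli `Z_j` on `n` qubits. -/
def Zq (n : ℕ) (j : Fin n) : Matrix (Fin n → Fin 2) (Fin n → Fin 2) ℂ :=
  Matrix.diagonal fun x => (-1 : ℂ) ^ (x j : ℕ)

/-- Pauli `X_j` on `n` qubits. -/
def Xq (n : ℕ) (j : Fin n) : Matrix (Fin n → Fin 2) (Fin n → Fin 2) ℂ :=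
  fun x y => if y = Function.update x j (1 - x j) then 1 else 0

/-- Pauli `Y_j` on `n` qubits. -/
def Yq (n : ℕ) (j : Fin n) : Matrix (Fin n → Fin 2) (Fin n → Fin 2) ℂ :=
  fun x y => if y = Function.update x j (1 - x j) then Complex.I * (-1 : ℂ) ^ (y j : ℕ) else 0

/-- `R_{rs} = (X_r X_s + Y_r Y_s)/2`. -/
def Rq (n : ℕ) (r s : Fin n) : Matrix (Fin n → Fin 2) (Fin n → Fin 2) ℂ :=
  ((1 : ℂ) / 2) • (Xq n r * Xq n s + Yq n r * Yq n s)

/-- `Z^b = ∏_j Z_j^(b j)`, the diagonal matrix with entry `(-1)^(Σ_j b j · x j)` at `x`. -/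
def Zpow (n : ℕ) (b : Fin n → Fin 2) : Matrix (Fin n → Fin 2) (Fin n → Fin 2) ℂ :=
  Matrix.diagonal fun x => (-1 : ℂ) ^ (∑ j, (b j : ℕ) * (x j : ℕ))

/-- Hamming weight: the number of `j` with `b j = 1`. -/
def hamw (n : ℕ) (b : Fin n → Fin 2) : ℕ := (Finset.univ.filter fun j => b j = 1).card

/-- A matrix on `n` `d`-level sites is `k`-local if it acts nontrivially only on some set
`S` of at most `k` sites. -/
def IsKLocal (n d k : ℕ) (A : Matrix (Fin n → Fin d) (Fin n → Fin d) ℂ) : Prop :=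
  ∃ S : Finset (Fin n), S.card ≤ k ∧
    (∀ x y, (∃ j, j ∉ S ∧ x j ≠ y j) → A x y = 0) ∧
    (∀ x y x' y' : Fin n → Fin d,
      (∀ j ∈ S, x j = x' j) → (∀ j ∈ S, y j = y' j) →
      (∀ j ∉ S, x j = y j) → (∀ j ∉ S, x' j = y' j) → A x y = A x' y')

/-- `D_θ = (e^{iθZ})^{⊗n}`: diagonal with entry `exp(iθ·Σ_j (-1)^(x j))` at `x`. -/
def Dtheta (n : ℕ) (θ : ℝ) : Matrix (Fin n → Fin 2) (Fin n → Fin 2) ℂ :=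
  Matrix.diagonal fun x => Complex.exp (Complex.I * (θ : ℂ) * ∑ j, (-1 : ℂ) ^ (x j : ℕ))

/-- `ξ_v θ = (cos θ)^(n-v) · (i sin θ)^v`. -/
def xiFun (n v : ℕ) : ℝ → ℂ :=
  fun θ => ((Real.cos θ : ℂ)) ^ (n - v) * (Complex.I * (Real.sin θ : ℂ)) ^ v

theorem aux_exp (n : ℕ) (θ : ℝ) (x : Fin n → Fin 2) :
    Complex.exp (Complex.I * (θ : ℂ) * ∑ j, (-1 : ℂ) ^ (x j : ℕ)) =
      ∏ j, ((Real.cos θ : ℂ) + (-1 : ℂ) ^ (x j : ℕ) * (Complex.I * (Real.sin θ : ℂ))) := by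
  rw [Finset.mul_sum, Complex.exp_sum]
  refine Finset.prod_congr rfl fun j _ => ?_
  have h : x j = 0 ∨ x j = 1 := by omega
  rcases h with h | h
  · rw [h]
    simp only [Fin.val_zero, pow_zero, mul_one, one_mul, Complex.ofReal_cos, Complex.ofReal_sin]
    rw [mul_comm Complex.I, Complex.exp_mul_I]
    ring
  · rw [h]
    simp only [Fin.val_one, pow_one, Complex.ofReal_cos, Complex.ofReal_sin]
    rw [show Complex.I * (θ : ℂ) * (-1) = (-(θ : ℂ)) * Complex.I by ring, Complex.exp_mul_I,
      Complex.cos_neg, Complex.sin_neg]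
    ring

theorem aux_sum (n : ℕ) (θ : ℝ) (g : Fin n → Fin 2 → ℂ) :
    ∑ x : Fin n → Fin 2, (∏ j, g j (x j)) *
        Complex.exp (Complex.I * (θ : ℂ) * ∑ j, (-1 : ℂ) ^ (x j : ℕ)) =
      ∏ j, ((g j 0 + g j 1) * (Real.cos θ : ℂ) +
        (g j 0 - g j 1) * (Complex.I * (Real.sin θ : ℂ))) := by
  simp_rw [aux_exp, ← Finset.prod_mul_distrib]
  have := Finset.prod_univ_sum (fun _ : Fin n => (Finset.univ : Finset (Fin 2)))
    (fun j y => g j y * ((Real.cos θ : ℂ) + (-1 : ℂ) ^ (y : ℕ) * (Complex.I * (Real.sin θ : ℂ))))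
  rw [Fintype.piFinset_univ] at this
  rw [← this]
  refine Finset.prod_congr rfl fun j _ => ?_
  rw [Fin.sum_univ_two]
  simp only [Fin.val_zero, Fin.val_one, pow_zero, pow_one]
  ring

theorem aux_mem (n k : ℕ) (S : Finset (Fin n)) (hS : S.card ≤ k) (a b : Fin n → ℝ)
    (hb : ∀ j, j ∉ S → b j = 0) :
    (fun θ : ℝ => ∏ j, ((a j : ℂ) * (Real.cos θ : ℂ) +
        (b j : ℂ) * (Complex.I * (Real.sin θ : ℂ)))) ∈
      Submodule.span ℝ {f : ℝ → ℂ | ∃ v : ℕ, v ≤ k ∧ f = xiFun n v} := by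
  have : (fun θ : ℝ => ∏ j, ((a j : ℂ) * (Real.cos θ : ℂ) +
        (b j : ℂ) * (Complex.I * (Real.sin θ : ℂ)))) =
      ∑ t : Finset (Fin n), ((∏ j ∈ tᶜ, a j) * ∏ j ∈ t, b j) • xiFun n t.card := by
    funext θ
    simp_rw [add_comm ((a _ : ℂ) * _)]
    rw [Finset.prod_add, Finset.powerset_univ, Finset.sum_apply]
    refine Finset.sum_congr rfl fun t _ => ?_
    rw [Pi.smul_apply, Complex.real_smul, xiFun]
    simp only [Finset.prod_mul_distrib, Finset.prod_const, ← Finset.compl_eq_univ_sdiff,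
      Finset.card_compl, Fintype.card_fin]
    push_cast
    ring
  rw [this]
  refine Submodule.sum_mem _ fun t _ => ?_
  by_cases ht : t ⊆ S
  · exact Submodule.smul_mem _ _ (Submodule.subset_span
      ⟨t.card, (Finset.card_le_card ht).trans hS, rfl⟩)
  · obtain ⟨j, hj, hjS⟩ := Finset.not_subset.1 ht
    rw [Finset.prod_eq_zero hj (hb j hjS), mul_zero, zero_smul]
    exact Submodule.zero_mem _

theorem aux_trace (n : ℕ) (A : Matrix (Fin n → Fin 2) (Fin n → Fin 2) ℂ) (θ : ℝ) :
    (A * Dtheta n θ).trace =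
      ∑ x, A x x * Complex.exp (Complex.I * (θ : ℂ) * ∑ j, (-1 : ℂ) ^ (x j : ℕ)) := by
  simp [Matrix.trace, Dtheta, Matrix.mul_diagonal]

theorem aux_le (n k : ℕ) (A : Matrix (Fin n → Fin 2) (Fin n → Fin 2) ℂ) (hA : Aᴴ = A)
    (hl : IsKLocal n 2 k A) :
    (fun θ => (A * Dtheta n θ).trace) ∈
      Submodule.span ℝ {f : ℝ → ℂ | ∃ v : ℕ, v ≤ k ∧ f = xiFun n v} := by
  obtain ⟨S, hS, -, h2⟩ := hl
  have hre : ∀ x, A x x = ((A x x).re : ℂ) := fun x => by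
    have := congrFun (congrFun hA x) x
    rw [Matrix.conjTranspose_apply] at this
    exact (Complex.conj_eq_iff_re.1 this).symm
  let r : (Fin n → Fin 2) → (Fin n → Fin 2) := fun x j => if j ∈ S then x j else 0
  have hr : ∀ x, A x x = A (r x) (r x) := fun x => by
    apply h2
    · intro j hj; simp [r, hj]
    · intro j hj; simp [r, hj]
    · intros; rfl
    · intros; rfl
  let g : (Fin n → Fin 2) → Fin n → Fin 2 → ℝ := fun s j y =>
    if (if j ∈ S then y else 0) = s j then 1 else 0
  have hg : ∀ s x, (if r x = s then (1 : ℂ) else 0) = ∏ j, (g s j (x j) : ℂ) := fun s x => by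
    simp only [g, r, apply_ite Complex.ofReal, Complex.ofReal_one, Complex.ofReal_zero]
    rw [Finset.prod_ite_zero]
    simp [funext_iff]
  have : (fun θ => (A * Dtheta n θ).trace) = ∑ s, (A s s).re • (fun θ : ℝ =>
      ∏ j, (((g s j 0 + g s j 1 : ℝ) : ℂ) * (Real.cos θ : ℂ) +
        ((g s j 0 - g s j 1 : ℝ) : ℂ) * (Complex.I * (Real.sin θ : ℂ)))) := by
    funext θ
    rw [aux_trace, Finset.sum_apply]
    simp only [Pi.smul_apply, Complex.real_smul, ← hre]
    push_cast
    have h := fun s => aux_sum n θ (fun j y => (g s j y : ℂ))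
    push_cast at h
    simp_rw [← h, ← hg, Finset.mul_sum]
    rw [Finset.sum_comm]
    refine Finset.sum_congr rfl fun x _ => ?_
    rw [hr x, Finset.sum_eq_single (r x)]
    · simp
    · intro s _ hs
      simp [hs.symm]
    · simp
  rw [this]
  refine Submodule.sum_mem _ fun s _ => Submodule.smul_mem _ _ ?_
  apply aux_mem n k S hS
  intro j hj
  simp [g, hj]

theorem aux_ge (n k v : ℕ) (hk : k ≤ n) (hv : v ≤ k) :
    ∃ A : Matrix (Fin n → Fin 2) (Fin n → Fin 2) ℂ,
      Aᴴ = A ∧ IsKLocal n 2 k A ∧ A * (∑ j, Zq n j) = (∑ j, Zq n j) * A ∧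
      xiFun n v = fun θ => (A * Dtheta n θ).trace := by
  let g : Fin n → Fin 2 → ℝ := fun j y => if (j : ℕ) < v then (-1) ^ (y : ℕ) / 2 else 1 / 2
  have hc : (Finset.univ.filter fun j : Fin n => (j : ℕ) < v).card = v := by
    rw [Fin.card_filter_val_lt]; omega
  have hc2 : (Finset.univ.filter fun j : Fin n => ¬ (j : ℕ) < v).card = n - v := by
    have := Finset.card_filter_add_card_filter_not
      (s := (Finset.univ : Finset (Fin n))) (fun j : Fin n => (j : ℕ) < v)
    rw [hc, Finset.card_univ, Fintype.card_fin] at this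
    omega
  refine ⟨Matrix.diagonal fun x => ((∏ j, g j (x j) : ℝ) : ℂ), ?_, ?_, ?_, ?_⟩
  · rw [Matrix.diagonal_conjTranspose]
    congr 1
    funext x
    exact Complex.conj_ofReal _
  · refine ⟨Finset.univ.filter fun j : Fin n => (j : ℕ) < v, hc.le.trans hv, ?_, ?_⟩
    · rintro x y ⟨j, -, hj⟩
      exact Matrix.diagonal_apply_ne _ fun h => hj (congrFun h j)
    · intro x y x' y' hx hy hxy hxy'
      have e : x = y ↔ x' = y' := by
        simp only [funext_iff]
        constructor
        · intro h j
          by_cases hj : j ∈ Finset.univ.filter fun j : Fin n => (j : ℕ) < v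
          · rw [← hx j hj, ← hy j hj, h j]
          · exact hxy' j hj
        · intro h j
          by_cases hj : j ∈ Finset.univ.filter fun j : Fin n => (j : ℕ) < v
          · rw [hx j hj, hy j hj, h j]
          · exact hxy j hj
      simp only [Matrix.diagonal_apply, e]
      congr 2
      refine Finset.prod_congr rfl fun j _ => ?_
      by_cases hj : (j : ℕ) < v
      · rw [hx j (by simpa using hj)]
      · simp [g, hj]
  · rw [Finset.mul_sum, Finset.sum_mul]
    refine Finset.sum_congr rfl fun j _ => ?_
    rw [Zq, Matrix.diagonal_mul_diagonal, Matrix.diagonal_mul_diagonal]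
    simp_rw [mul_comm]
  · funext θ
    rw [aux_trace]
    simp only [Matrix.diagonal_apply_eq]
    push_cast
    rw [aux_sum n θ (fun j y => (g j y : ℂ))]
    have : ∀ j : Fin n, (((g j 0 : ℝ) : ℂ) + (g j 1 : ℝ)) * (Real.cos θ : ℂ) +
        (((g j 0 : ℝ) : ℂ) - (g j 1 : ℝ)) * (Complex.I * (Real.sin θ : ℂ)) =
        if (j : ℕ) < v then Complex.I * (Real.sin θ : ℂ) else (Real.cos θ : ℂ) := by
      intro j
      by_cases hj : (j : ℕ) < v
      · simp only [g, hj, if_true, Fin.val_zero, Fin.val_one]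
        push_cast
        ring
      · simp only [g, hj, if_false]
        push_cast
        ring
    rw [Finset.prod_congr rfl fun j _ => this j, Finset.prod_ite, Finset.prod_const,
      Finset.prod_const, hc, hc2, xiFun, mul_comm]

theorem aux_li (n k : ℕ) (hk : k ≤ n) :
    LinearIndependent ℝ (fun v : Fin (k + 1) => xiFun n v) := by
  rw [Fintype.linearIndependent_iff]
  intro c hc
  let P : Polynomial ℂ := ∑ v : Fin (k + 1), Polynomial.C (c v : ℂ) * Polynomial.X ^ (v : ℕ)
  have hP : P = 0 := by
    apply Polynomial.eq_zero_of_infinite_isRoot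
    have hinj : Function.Injective (fun t : ℝ => Complex.I * (t : ℂ)) := fun s t h => by
      simpa using h
    refine (Set.infinite_range_of_injective hinj).mono ?_
    rintro _ ⟨t, rfl⟩
    have h0 := congrFun hc (Real.arctan t)
    have hcos : (Real.cos (Real.arctan t) : ℂ) ≠ 0 :=
      Complex.ofReal_ne_zero.2 (Real.cos_arctan_pos t).ne'
    have hsin : (Real.sin (Real.arctan t) : ℂ) = t * (Real.cos (Real.arctan t) : ℂ) := by
      rw [← Complex.ofReal_mul]
      congr 1
      have := Real.tan_mul_cos (Real.cos_arctan_pos t).ne'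
      rw [Real.tan_arctan] at this
      exact this.symm
    have h1 : (Real.cos (Real.arctan t) : ℂ) ^ n * P.eval (Complex.I * (t : ℂ)) = 0 := by
      rw [Finset.sum_apply] at h0
      rw [← Pi.zero_apply (M := fun _ : ℝ => ℂ) (Real.arctan t), ← h0]
      simp only [P, Polynomial.eval_finset_sum, Finset.mul_sum]
      refine Finset.sum_congr rfl fun v _ => ?_
      have hv : n = (n - (v : ℕ)) + v := by omega
      rw [Pi.smul_apply, Complex.real_smul, xiFun, hsin]
      simp only [Polynomial.eval_mul, Polynomial.eval_C, Polynomial.eval_pow, Polynomial.eval_X]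
      conv_lhs => rw [hv, pow_add]
      ring
    exact (mul_eq_zero.1 h1).resolve_left (pow_ne_zero _ hcos)
  intro v
  have h := congrArg (fun p => Polynomial.coeff p (v : ℕ)) hP
  simp only [P, Polynomial.finset_sum_coeff, Polynomial.coeff_C_mul, Polynomial.coeff_X_pow,
    Polynomial.coeff_zero] at h
  rw [Finset.sum_eq_single v] at h
  · simpa using h
  · intro b _ hb
    have : (v : ℕ) ≠ b := fun h => hb (Fin.ext h.symm)
    simp [this]
  · simp

theorem stmt13 (n k : ℕ) (hk : k ≤ n) :
    (Submodule.span ℝ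
        {f : ℝ → ℂ | ∃ A : Matrix (Fin n → Fin 2) (Fin n → Fin 2) ℂ,
          Aᴴ = A ∧ IsKLocal n 2 k A ∧ A * (∑ j, Zq n j) = (∑ j, Zq n j) * A ∧
          f = fun θ => (A * Dtheta n θ).trace} =
      Submodule.span ℝ {f : ℝ → ℂ | ∃ v : ℕ, v ≤ k ∧ f = xiFun n v}) ∧
    Module.finrank ℝ
        (Submodule.span ℝ {f : ℝ → ℂ | ∃ v : ℕ, v ≤ k ∧ f = xiFun n v}) = k + 1 := by
  refine ⟨le_antisymm (Submodule.span_le.2 ?_) (Submodule.span_mono ?_), ?_⟩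
  · rintro f ⟨A, hA, hl, -, rfl⟩
    exact aux_le n k A hA hl
  · rintro f ⟨v, hv, rfl⟩
    exact aux_ge n k v hk hv
  · have : {f : ℝ → ℂ | ∃ v : ℕ, v ≤ k ∧ f = xiFun n v} =
        Set.range (fun v : Fin (k + 1) => xiFun n v) := by
      ext f
      constructor
      · rintro ⟨v, hv, rfl⟩
        exact ⟨⟨v, by omega⟩, rfl⟩
      · rintro ⟨v, rfl⟩
        exact ⟨v, by omega, rfl⟩
    rw [this, finrank_span_eq_card (aux_li n k hk), Fintype.card_fin]

end
end

section
/- Fix n : ℕ, let m ≥ 2, and let j_1, …, j_m be pairwise distinct sites in Fin n. Define the nested commutator K as follows: if m is odd, K := [R_{j_1 j_m}, [R_{j_m j_{m-1}}, [⋯, [R_{j_3 j_2}, R_{j_2 j_1}]⋯]]]; if m is even, K := [R_{j_1 j_m}, [R_{j_m j_{m-1}}, [⋯, [R_{j_3 j_2}, [R_{j_2 j_1}, (1/2) • Z_{j_1}]]⋯]]]. Then there exists c ∈ {1, -1} (depending only on m) such that (Z_{j_1} - Z_{j_m}) * (Z_{j_1} * Z_{j_2} * ⋯ * Z_{j_m})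 = c • K. -/
/-! STATEMENT 14: The nested-commutator identity
`(Z_{j_1} - Z_{j_m})·Z_{j_1}⋯Z_{j_m} = ±[R_{j_1 j_m}, [R_{j_m j_{m-1}}, [⋯]]]`
(with innermost term `[R_{j_3 j_2}, R_{j_2 j_1}]` for odd `m`, and
`[R_{j_2 j_1}, (1/2)Z_{j_1}]` for even `m`). -/

open Matrix

noncomputable section

/-- The inner chain of nested commutators: `chainFrom j base off 0 = base` and
`chainFrom j base off (t+1) = ⁅R_{j (t+off+1), j (t+off)}, chainFrom j base off t⁆`. -/
def chainFrom (n : ℕ) (j : ℕ → Fin n)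
    (base : Matrix (Fin n → Fin 2) (Fin n → Fin 2) ℂ) (off : ℕ) :
    ℕ → Matrix (Fin n → Fin 2) (Fin n → Fin 2) ℂ
  | 0 => base
  | t + 1 => ⁅Rq n (j (t + off + 1)) (j (t + off)), chainFrom n j base off t⁆

set_option linter.unusedSimpArgs false
set_option linter.unusedVariables false

abbrev MM (n : ℕ) := Matrix (Fin n → Fin 2) (Fin n → Fin 2) ℂ

lemma Z_sq (n : ℕ) (r : Fin n) : Zq n r * Zq n r = 1 := by
  simp [Zq, Matrix.diagonal_mul_diagonal, ← mul_pow]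

lemma Z_comm (n : ℕ) (r s : Fin n) : Zq n r * Zq n s = Zq n s * Zq n r := by
  simp [Zq, Matrix.diagonal_mul_diagonal, mul_comm]

lemma Y_eq (n : ℕ) (r : Fin n) : Yq n r = Complex.I • (Xq n r * Zq n r) := by
  ext x y
  simp only [Yq, Zq, Matrix.smul_apply, Matrix.mul_diagonal, Xq]
  split_ifs <;> simp

lemma X_mul_apply (n : ℕ) (r : Fin n) (M : MM n) (x y) :
    (Xq n r * M) x y = M (Function.update x r (1 - x r)) y := by
  simp [Matrix.mul_apply, Xq]

lemma X_sq (n : ℕ) (r : Fin n) : Xq n r * Xq n r = 1 := by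
  ext x y
  rw [X_mul_apply]
  simp [Xq, Matrix.one_apply, eq_comm]

lemma X_comm (n : ℕ) (r s : Fin n) : Xq n r * Xq n s = Xq n s * Xq n r := by
  by_cases h : r = s
  · rw [h]
  ext x y
  rw [X_mul_apply, X_mul_apply]
  simp only [Xq]
  rw [Function.update_of_ne (Ne.symm h), Function.update_of_ne h, Function.update_comm h]

lemma ZX_same (n : ℕ) (r : Fin n) : Zq n r * Xq n r = -(Xq n r * Zq n r) := by
  ext x y
  simp only [Zq, Matrix.neg_apply, Matrix.mul_diagonal, Matrix.diagonal_mul, Xq]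
  split_ifs with h
  · subst h
    simp only [Function.update_self]
    generalize x r = a
    fin_cases a <;> simp
  · simp

lemma ZX_ne (n : ℕ) (r s : Fin n) (h : r ≠ s) : Zq n r * Xq n s = Xq n s * Zq n r := by
  ext x y
  simp only [Zq, Matrix.mul_diagonal, Matrix.diagonal_mul, Xq]
  split_ifs with h'
  · subst h'
    simp [Function.update_of_ne h]
  · simp

lemma R_eq (n : ℕ) (r s : Fin n) (h : r ≠ s) :
    Rq n r s = ((1 : ℂ) / 2) • (Xq n r * Xq n s * (1 - Zq n r * Zq n s)) := by
  rw [Rq, Y_eq, Y_eq]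
  congr 1
  rw [smul_mul_smul_comm, Complex.I_mul_I, neg_one_smul, mul_sub, mul_one, sub_eq_add_neg]
  congr 2
  rw [mul_assoc, ← mul_assoc (Zq n r), ZX_ne n r s h]
  simp only [mul_assoc]

lemma R_symm (n : ℕ) (r s : Fin n) (h : r ≠ s) : Rq n r s = Rq n s r := by
  rw [R_eq n r s h, R_eq n s r h.symm, X_comm, Z_comm]

lemma ring_aux {A : Type*} [Ring A] (xt xs xr zt zs zr : A)
    (h1 : xs * xs = 1) (h2 : xs * xt = xt * xs) (h3 : xr * xt = xt * xr) (h4 : xr * xs = xs * xr)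
    (g1 : zt * zt = 1) (g2 : zs * zs = 1) (g3 : zr * zr = 1)
    (k2 : zs * zt = zt * zs) (k3 : zr * zt = zt * zr) (k4 : zr * zs = zs * zr)
    (a1 : zt * xt = -(xt * zt)) (a2 : zs * xs = -(xs * zs)) (a3 : zr * xr = -(xr * zr))
    (b1 : zt * xs = xs * zt) (b2 : zt * xr = xr * zt) (b3 : zs * xt = xt * zs)
    (b4 : zs * xr = xr * zs) (b5 : zr * xt = xt * zr) (b6 : zr * xs = xs * zr) :
    (xt * xs * (1 - zt * zs)) * (xs * xr * (1 - zs * zr))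
      - (xs * xr * (1 - zs * zr)) * (xt * xs * (1 - zt * zs))
      = - (2 * (xt * xr * (1 - zt * zr) * (zr * zs))) := by
  have as : ∀ {p q r : A}, p * q = r → ∀ w, p * (q * w) = r * w := by
    intro p q r h w; rw [← h, mul_assoc]
  simp only [mul_sub, sub_mul, mul_one, one_mul, mul_assoc, mul_neg, neg_mul, neg_neg,
    h1, h2, h3, h4, g1, g2, g3, k2, k3, k4, a1, a2, a3, b1, b2, b3, b4, b5, b6,
    as h1, as h2, as h3, as h4, as g1, as g2, as g3, as k2, as k3, as k4, as a1, as a2, as a3,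
    as b1, as b2, as b3, as b4, as b5, as b6]
  noncomm_ring

lemma R_comm_R (n : ℕ) (t s r : Fin n) (hts : t ≠ s) (hsr : s ≠ r) (htr : t ≠ r) :
    ⁅Rq n t s, Rq n s r⁆ = - (Rq n t r * (Zq n r * Zq n s)) := by
  rw [R_eq n t s hts, R_eq n s r hsr, R_eq n t r htr, Ring.lie_def, smul_mul_smul_comm,
    smul_mul_smul_comm, ← smul_sub,
    ring_aux (Xq n t) (Xq n s) (Xq n r) (Zq n t) (Zq n s) (Zq n r)
      (X_sq _ _) (X_comm _ _ _) (X_comm _ _ _) (X_comm _ _ _) (Z_sq _ _) (Z_sq _ _) (Z_sq _ _)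
      (Z_comm _ _ _) (Z_comm _ _ _) (Z_comm _ _ _) (ZX_same _ _) (ZX_same _ _) (ZX_same _ _)
      (ZX_ne _ _ _ hts) (ZX_ne _ _ _ htr) (ZX_ne _ _ _ hts.symm) (ZX_ne _ _ _ hsr)
      (ZX_ne _ _ _ htr.symm) (ZX_ne _ _ _ hsr.symm)]
  rw [smul_neg, smul_mul_assoc, two_mul, ← two_smul ℂ, smul_smul]
  norm_num

lemma Z_R_ne (n : ℕ) (q r s : Fin n) (h : r ≠ s) (h1 : q ≠ r) (h2 : q ≠ s) :
    Commute (Rq n r s) (Zq n q) := by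
  rw [R_eq n r s h]
  apply Commute.smul_left
  have a : Commute (Xq n r) (Zq n q) := (ZX_ne n q r h1).symm
  have b : Commute (Xq n s) (Zq n q) := (ZX_ne n q s h2).symm
  have c : Commute (Zq n r) (Zq n q) := Z_comm _ _ _
  have d : Commute (Zq n s) (Zq n q) := Z_comm _ _ _
  exact (a.mul_left b).mul_left ((Commute.one_left _).sub_left (c.mul_left d))

lemma ring_aux2 {A : Type*} [Ring A] (xs xr zs zr : A)
    (h1 : xs * xs = 1) (h4 : xr * xs = xs * xr) (h5 : xr * xr = 1)
    (g2 : zs * zs = 1) (g3 : zr * zr = 1) (k4 : zr * zs = zs * zr)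
    (a2 : zs * xs = -(xs * zs)) (a3 : zr * xr = -(xr * zr))
    (b4 : zs * xr = xr * zs) (b6 : zr * xs = xs * zr) :
    (xs * xr * (1 - zs * zr)) * zr = - (zr * (xs * xr * (1 - zs * zr))) ∧
    (xs * xr * (1 - zs * zr)) * ((xs * xr * (1 - zs * zr)) * zr) = 2 * (zr - zs) := by
  have as : ∀ {p q r : A}, p * q = r → ∀ w, p * (q * w) = r * w := by
    intro p q r h w; rw [← h, mul_assoc]
  constructor <;>
  simp only [mul_sub, sub_mul, mul_one, one_mul, mul_assoc, mul_neg, neg_mul, neg_neg,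
    h1, h4, h5, g2, g3, k4, a2, a3, b4, b6,
    as h1, as h4, as h5, as g2, as g3, as k4, as a2, as a3, as b4, as b6] <;>
  noncomm_ring

lemma R_Z_same (n : ℕ) (s r : Fin n) (h : s ≠ r) :
    Rq n s r * Zq n r = - (Zq n r * Rq n s r) ∧
    Rq n s r * (Rq n s r * Zq n r) = ((1 : ℂ) / 2) • (Zq n r - Zq n s) := by
  obtain ⟨e1, e2⟩ := ring_aux2 (Xq n s) (Xq n r) (Zq n s) (Zq n r)
    (X_sq _ _) (X_comm _ _ _) (X_sq _ _) (Z_sq _ _) (Z_sq _ _)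
      (Z_comm _ _ _) (ZX_same _ _) (ZX_same _ _) (ZX_ne _ _ _ h) (ZX_ne _ _ _ h.symm)
  rw [R_eq n s r h]
  constructor
  · rw [smul_mul_assoc, e1, smul_neg, mul_smul_comm]
  · rw [smul_mul_assoc _ _ (Zq n r), smul_mul_smul_comm, e2, two_mul, ← two_smul ℂ, smul_smul]
    norm_num

def PZ (n : ℕ) (j : ℕ → Fin n) (t : ℕ) : MM n := ((List.range t).map fun t => Zq n (j t)).prod

lemma PZ_succ (n : ℕ) (j : ℕ → Fin n) (t : ℕ) : PZ n j (t+1) = PZ n j t * Zq n (j t) := by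
  simp [PZ, List.range_succ]

lemma PZ_comm (n : ℕ) (j : ℕ → Fin n) (A : MM n) (t : ℕ) (h : ∀ i < t, Commute A (Zq n (j i))) :
    Commute A (PZ n j t) := by
  induction t with
  | zero => simp [PZ]
  | succ t ih =>
    rw [PZ_succ]
    exact (ih fun i hi => h i (by omega)).mul_right (h t (by omega))

lemma lie_mul_right' {A : Type*} [Ring A] (a b w : A) (h : Commute a w) :
    ⁅a, b * w⁆ = ⁅a, b⁆ * w := by
  rw [Ring.lie_def, Ring.lie_def, sub_mul, mul_assoc b w a, ← h.eq]
  simp only [mul_assoc]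

lemma lie_smul_c {n : ℕ} (a b : MM n) (c : ℂ) : ⁅a, c • b⁆ = c • ⁅a, b⁆ := by
  rw [Ring.lie_def, Ring.lie_def, smul_sub, mul_smul_comm, smul_mul_assoc]

lemma step (n m : ℕ) (j : ℕ → Fin n) (hj : ∀ s t, s < m → t < m → j s = j t → s = t)
    (t a : ℕ) (ht : t + 2 < m) :
    ⁅Rq n (j (t+2)) (j (t+1)), Rq n (j (t+1)) (j 0) * (PZ n j (t+1) * Zq n (j 0) ^ a)⁆
      = - (Rq n (j (t+2)) (j 0) * (PZ n j (t+2) * Zq n (j 0) ^ (a+1))) := by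
  have hne : ∀ s t, s < m → t < m → s ≠ t → j s ≠ j t := fun s t h1 h2 h3 h4 => h3 (hj s t h1 h2 h4)
  have hz : ∀ i < t+1, Commute (Rq n (j (t+2)) (j (t+1))) (Zq n (j i)) := fun i hi =>
    Z_R_ne _ _ _ _ (hne _ _ (by omega) (by omega) (by omega))
      (hne _ _ (by omega) (by omega) (by omega)) (hne _ _ (by omega) (by omega) (by omega))
  rw [lie_mul_right' _ _ _ ((PZ_comm _ _ _ _ hz).mul_right ((hz 0 (by omega)).pow_right a)),
    R_comm_R _ _ _ _ (hne _ _ (by omega) (by omega) (by omega))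
      (hne _ _ (by omega) (by omega) (by omega)) (hne _ _ (by omega) (by omega) (by omega)),
    PZ_succ n j (t+1), pow_succ']
  have c1 : Commute (Zq n (j 0)) (PZ n j (t+1)) := PZ_comm _ _ _ _ fun i _ => Z_comm _ _ _
  have c2 : Commute (Zq n (j (t+1))) (PZ n j (t+1)) := PZ_comm _ _ _ _ fun i _ => Z_comm _ _ _
  rw [neg_mul, mul_assoc]
  congr 2
  have : Zq n (j 0) * Zq n (j (t+1)) * PZ n j (t+1) = PZ n j (t+1) * Zq n (j (t+1)) * Zq n (j 0) := by
    rw [mul_assoc, c2.eq, ← mul_assoc, c1.eq, mul_assoc, mul_assoc, Z_comm]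
  rw [← mul_assoc, this]
  simp only [mul_assoc]

lemma chain_odd (n m : ℕ) (j : ℕ → Fin n) (hj : ∀ s t, s < m → t < m → j s = j t → s = t)
    (t : ℕ) (ht : t + 1 < m) :
    chainFrom n j (Rq n (j 1) (j 0)) 1 t =
      ((-1 : ℂ) ^ t) • (Rq n (j (t+1)) (j 0) * (PZ n j (t+1) * Zq n (j 0) ^ (t+1))) := by
  induction t with
  | zero => simp [chainFrom, PZ, Z_sq]
  | succ t ih =>
    rw [chainFrom, ih (by omega), lie_smul_c, show t + 1 + 1 = t + 2 from rfl,
      step n m j hj t (t+1) (by omega), pow_succ (-1 : ℂ)]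
    simp

lemma chain_even (n m : ℕ) (j : ℕ → Fin n) (hj : ∀ s t, s < m → t < m → j s = j t → s = t)
    (t : ℕ) (ht : t + 1 < m) :
    chainFrom n j (((1 : ℂ) / 2) • Zq n (j 0)) 0 (t+1) =
      ((-1 : ℂ) ^ t) • (Rq n (j (t+1)) (j 0) * (PZ n j (t+1) * Zq n (j 0) ^ t)) := by
  induction t with
  | zero =>
    have h : j 1 ≠ j 0 := fun h => by have := hj 1 0 (by omega) (by omega) h; omega
    have := (R_Z_same n (j 1) (j 0) h).1
    have e : Zq n (j 0) * Rq n (j 1) (j 0) = - (Rq n (j 1) (j 0) * Zq n (j 0)) := by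
      rw [this]; simp
    have e' : ⁅Rq n (j 1) (j 0), ((1 : ℂ) / 2) • Zq n (j 0)⁆ = Rq n (j 1) (j 0) * Zq n (j 0) := by
      rw [lie_smul_c, Ring.lie_def, e, sub_neg_eq_add, ← two_smul ℂ, smul_smul]
      norm_num
    simp only [chainFrom, PZ]
    refine e'.trans ?_
    simp
  | succ t ih =>
    rw [chainFrom, ih (by omega), lie_smul_c, Nat.add_zero, show t + 1 + 1 = t + 2 from rfl,
      step n m j hj t t (by omega), pow_succ (-1 : ℂ)]
    simp

lemma Z_pow_even (n : ℕ) (r : Fin n) (k : ℕ) (h : Even k) : Zq n r ^ k = 1 := by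
  obtain ⟨l, rfl⟩ := h
  rw [← two_mul, pow_mul, pow_two, Z_sq, one_pow]

lemma final (n m : ℕ) (j : ℕ → Fin n) (hj : ∀ s t, s < m → t < m → j s = j t → s = t)
    (t : ℕ) (ht : t + 1 < m) :
    ⁅Rq n (j 0) (j (t+1)), Rq n (j (t+1)) (j 0) * PZ n j (t+1)⁆ =
      - ((Zq n (j 0) - Zq n (j (t+1))) * PZ n j (t+2)) := by
  have hne : ∀ s t, s < m → t < m → s ≠ t → j s ≠ j t := fun s t h1 h2 h3 h4 => h3 (hj s t h1 h2 h4)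
  have h0 := hne (t+1) 0 (by omega) (by omega) (by omega)
  obtain ⟨e1, e2⟩ := R_Z_same n (j (t+1)) (j 0) h0
  rw [R_symm n (j 0) (j (t+1)) h0.symm]
  have hP : PZ n j (t+1) = Zq n (j 0) * PZ n (fun i => j (i+1)) t := by
    simp [PZ, List.range_succ_eq_map, Function.comp_def]
  have hc : Commute (Rq n (j (t+1)) (j 0)) (PZ n (fun i => j (i+1)) t) :=
    PZ_comm _ _ _ _ fun i hi => Z_R_ne _ _ _ _ h0
      (hne _ _ (by omega) (by omega) (by omega)) (hne _ _ (by omega) (by omega) (by omega))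
  have c2 : Commute (Zq n (j (t+1))) (PZ n (fun i => j (i+1)) t) :=
    PZ_comm _ _ _ _ fun i _ => Z_comm _ _ _
  rw [PZ_succ n j (t+1), hP, ← mul_assoc, lie_mul_right' _ _ _ hc, Ring.lie_def, e2, mul_assoc _ (Zq n (j 0)),
    show Zq n (j 0) * Rq n (j (t+1)) (j 0) = - (Rq n (j (t+1)) (j 0) * Zq n (j 0)) by rw [e1]; simp,
    mul_neg, e2, sub_neg_eq_add, ← two_smul ℂ, smul_smul, mul_assoc (Zq n (j 0)), ← c2.eq,
    ← mul_assoc, ← mul_assoc, ← neg_mul]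
  congr 1
  rw [mul_assoc, sub_mul, ← mul_assoc, Z_sq, one_mul, Z_comm n (j 0), ← mul_assoc, Z_sq]
  norm_num

theorem stmt14 (n m : ℕ) (hm : 2 ≤ m) (j : ℕ → Fin n)
    (hj : ∀ s t, s < m → t < m → j s = j t → s = t) :
    ∃ c : ℂ, (c = 1 ∨ c = -1) ∧
      (Zq n (j 0) - Zq n (j (m - 1))) * ((List.range m).map fun t => Zq n (j t)).prod =
        c • (if m % 2 = 1 then
          ⁅Rq n (j 0) (j (m - 1)), chainFrom n j (Rq n (j 1) (j 0)) 1 (m - 2)⁆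
        else
          ⁅Rq n (j 0) (j (m - 1)), chainFrom n j (((1 : ℂ) / 2) • Zq n (j 0)) 0 (m - 1)⁆) := by
  obtain ⟨t, rfl⟩ : ∃ t, m = t + 2 := ⟨m - 2, by omega⟩
  have e1 : t + 2 - 1 = t + 1 := by omega
  have e2 : t + 2 - 2 = t := by omega
  have hf := final n (t+2) j hj t (by omega)
  have hs : ((-1 : ℂ) ^ t) * ((-1 : ℂ) ^ t) = 1 := by rw [← mul_pow]; simp
  rw [e1, e2]
  refine ⟨-(-1) ^ t, ?_, ?_⟩
  · rcases neg_one_pow_eq_or ℂ t with h | h <;> rw [h] <;> simp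
  change _ * PZ n j (t+2) = _
  split_ifs with h
  · rw [chain_odd n (t+2) j hj t (by omega), Z_pow_even n (j 0) (t+1) (by rw [Nat.even_iff]; omega),
      mul_one, lie_smul_c, hf, smul_smul, neg_mul, hs]
    simp
  · rw [chain_even n (t+2) j hj t (by omega), Z_pow_even n (j 0) t (by rw [Nat.even_iff]; omega),
      mul_one, lie_smul_c, hf, smul_smul, neg_mul, hs]
    simp

end
end

section
/- Let n ≥ 1, d ≥ 2, let j ≠ j' be distinct sites in Fin n, and let 1 ≤ l, l' ≤ d-1. On the extended index type (Fin n → Fin d) × Fin 2, the following identity of matrices holds: (R^{(l,l')}_{j,j'} ⊗ I_a) * Z_a = (1/2) • [R^{(l)}_{j,a}, [R^{(l')}_{j',a}, Z_a]], where [A,B] = A*B - B*A. (This is the identity that allows system-system interactions to be engineered from system-ancilla interactions via a catalyst qubit.) -/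
/-!
STATEMENT 16: The catalyst identity
`(R^{(l,l')}_{j,j'} ⊗ I_a) * Z_a = (1/2) • [R^{(l)}_{j,a}, [R^{(l')}_{j',a}, Z_a]]`.
-/

open Matrix

noncomputable section

/-- `l - 1` inside `Fin d` (truncated predecessor). -/
def fpred {d : ℕ} (l : Fin d) : Fin d := ⟨l.val - 1, lt_of_le_of_lt (Nat.sub_le _ _) l.isLt⟩

/-- `|l-1⟩⟨l|_j`. -/
def lowerOp (n d : ℕ) (j : Fin n) (l : Fin d) :
    Matrix (Fin n → Fin d) (Fin n → Fin d) ℂ :=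
  fun ρ σ => if σ j = l ∧ ρ = Function.update σ j (fpred l) then 1 else 0

/-- `|l⟩⟨l-1|_j`. -/
def raiseOp (n d : ℕ) (j : Fin n) (l : Fin d) :
    Matrix (Fin n → Fin d) (Fin n → Fin d) ℂ :=
  fun ρ σ => if σ j = fpred l ∧ ρ = Function.update σ j l then 1 else 0

/-- `R^{(l,l')}_{j,j'}`. -/
def Rsys (n d : ℕ) (j j' : Fin n) (l l' : Fin d) :
    Matrix (Fin n → Fin d) (Fin n → Fin d) ℂ :=
  lowerOp n d j l * raiseOp n d j' l' + raiseOp n d j l * lowerOp n d j' l'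

/-- `Z_a`, Pauli-Z on the ancilla qubit. -/
def Za (n d : ℕ) : Matrix ((Fin n → Fin d) × Fin 2) ((Fin n → Fin d) × Fin 2) ℂ :=
  Matrix.diagonal fun p => (-1 : ℂ) ^ (p.2 : ℕ)

/-- `R^{(l)}_{j,a}`, the system-ancilla energy-conserving coupling. -/
def Ranc (n d : ℕ) (j : Fin n) (l : Fin d) :
    Matrix ((Fin n → Fin d) × Fin 2) ((Fin n → Fin d) × Fin 2) ℂ :=
  fun p q =>
    if p.2 = 1 ∧ q.2 = 0 ∧ q.1 j = l ∧ p.1 = Function.update q.1 j (fpred l) then 1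
    else if p.2 = 0 ∧ q.2 = 1 ∧ q.1 j = fpred l ∧ p.1 = Function.update q.1 j l then 1
    else 0

/-- `A ⊗ I_a`. -/
def extAnc (n d : ℕ) (A : Matrix (Fin n → Fin d) (Fin n → Fin d) ℂ) :
    Matrix ((Fin n → Fin d) × Fin 2) ((Fin n → Fin d) × Fin 2) ℂ :=
  fun p q => if p.2 = q.2 then A p.1 q.1 else 0

/-- helper: `|b⟩⟨a|_j`. -/
def eOp (n d : ℕ) (j : Fin n) (a b : Fin d) :
    Matrix (Fin n → Fin d) (Fin n → Fin d) ℂ :=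
  fun ρ σ => if σ j = a ∧ ρ = Function.update σ j b then 1 else 0

lemma eOp_mul (n d : ℕ) (j j' : Fin n) (hjj : j ≠ j') (a b a' b' : Fin d)
    (ρ σ : Fin n → Fin d) :
    (eOp n d j a b * eOp n d j' a' b') ρ σ =
      if σ j = a ∧ σ j' = a' ∧ ρ = Function.update (Function.update σ j' b') j b
      then 1 else 0 := by
  rw [Matrix.mul_apply, Finset.sum_eq_single (Function.update σ j' b')]
  · simp only [eOp, Function.update_of_ne hjj]
    split_ifs <;> simp_all
  · intro τ _ h
    simp [eOp, h]
  · simp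

lemma eOp_comm (n d : ℕ) (j j' : Fin n) (hjj : j ≠ j') (a b a' b' : Fin d) :
    eOp n d j a b * eOp n d j' a' b' = eOp n d j' a' b' * eOp n d j a b := by
  ext ρ σ
  rw [eOp_mul _ _ _ _ hjj, eOp_mul _ _ _ _ hjj.symm, Function.update_comm hjj]
  congr 1
  apply propext
  tauto

lemma Ranc_apply (n d : ℕ) (j : Fin n) (l : Fin d) (ρ σ : Fin n → Fin d) (x y : Fin 2) :
    Ranc n d j l (ρ, x) (σ, y) =
      if x = 1 ∧ y = 0 then lowerOp n d j l ρ σ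
      else if x = 0 ∧ y = 1 then raiseOp n d j l ρ σ else 0 := by
  fin_cases x <;> fin_cases y <;> simp [Ranc, lowerOp, raiseOp]

lemma Ranc_mul (n d : ℕ) (j j' : Fin n) (l l' : Fin d) (ρ σ : Fin n → Fin d) (x y : Fin 2) :
    (Ranc n d j l * Ranc n d j' l') (ρ, x) (σ, y) =
      if x = 1 ∧ y = 1 then (lowerOp n d j l * raiseOp n d j' l') ρ σ
      else if x = 0 ∧ y = 0 then (raiseOp n d j l * lowerOp n d j' l') ρ σ else 0 := by
  simp only [Matrix.mul_apply, Fintype.sum_prod_type, Ranc_apply, Fin.sum_univ_two]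
  fin_cases x <;> fin_cases y <;> simp

lemma anti (n d : ℕ) (j : Fin n) (l : Fin d) :
    Za n d * Ranc n d j l = - (Ranc n d j l * Za n d) := by
  ext ⟨ρ, x⟩ ⟨σ, y⟩
  simp only [Za, Matrix.diagonal_mul, Matrix.mul_diagonal, Matrix.neg_apply, Ranc_apply]
  fin_cases x <;> fin_cases y <;> simp

lemma key (n d : ℕ) (j j' : Fin n) (hjj : j ≠ j') (l l' : Fin d) :
    extAnc n d (Rsys n d j j' l l') =
      Ranc n d j l * Ranc n d j' l' + Ranc n d j' l' * Ranc n d j l := by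
  have h1 : lowerOp n d j' l' * raiseOp n d j l = raiseOp n d j l * lowerOp n d j' l' :=
    eOp_comm n d j' j hjj.symm _ _ _ _
  have h2 : raiseOp n d j' l' * lowerOp n d j l = lowerOp n d j l * raiseOp n d j' l' :=
    eOp_comm n d j' j hjj.symm _ _ _ _
  ext ⟨ρ, x⟩ ⟨σ, y⟩
  rw [Matrix.add_apply, Ranc_mul, Ranc_mul, h1, h2]
  fin_cases x <;> fin_cases y <;> simp [extAnc, Rsys, add_comm]

theorem stmt16 (n d : ℕ) (hn : 1 ≤ n) (hd : 2 ≤ d) (j j' : Fin n) (hjj : j ≠ j')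
    (l l' : Fin d) (hl : 1 ≤ (l : ℕ)) (hl' : 1 ≤ (l' : ℕ)) :
    extAnc n d (Rsys n d j j' l l') * Za n d =
      ((1 : ℂ) / 2) • ⁅Ranc n d j l, ⁅Ranc n d j' l', Za n d⁆⁆ := by
  rw [key n d j j' hjj, Ring.lie_def, Ring.lie_def, anti]
  have h : Ranc n d j' l' * Za n d * Ranc n d j l
      = - (Ranc n d j' l' * Ranc n d j l * Za n d) := by
    rw [mul_assoc, anti, mul_neg, mul_assoc]
  rw [sub_neg_eq_add, mul_add, add_mul (Ranc n d j' l' * Za n d), h, ← mul_assoc, add_mul]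
  module

end
end

section
/- Let n ≥ 1 and d ≥ 2. Every diagonal matrix H indexed by (Fin n → Fin d) with real diagonal entries can be written as H = (Tr(H)/d^n) • 1 + D, where D lies in the real span of the set of products {Z^{(l_1)}_{j_1} * Z^{(l_2)}_{j_2} * ⋯ * Z^{(l_t)}_{j_t} : 1 ≤ t ≤ n, j_1 < j_2 < ⋯ < j_t in Fin n, 1 ≤ l_r ≤ d-1}. In particular, every such H lies in the real span of the identity together with these products. -/
/-!
STATEMENT 17: Every diagonal matrix with real entries decomposes as its trace part plus an
element of the real span of the products `Z^{(l_1)}_{j_1} ⋯ Z^{(l_t)}_{j_t}` with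
`1 ≤ t ≤ n`, `j_1 < ⋯ < j_t` and `1 ≤ l_r ≤ d-1`.
-/

open Matrix

noncomputable section

/-- `Z^{(l)}_j`: the Pauli-Z operator of the two-level subsystem spanned by levels `l-1`
and `l` of site `j`: diagonal, with entry `1` at `ρ` if `ρ j = l-1`, `-1` if `ρ j = l`,
`0` otherwise. -/
def Zld (n d : ℕ) (j : Fin n) (l : Fin d) : Matrix (Fin n → Fin d) (Fin n → Fin d) ℂ :=
  Matrix.diagonal fun ρ => if ρ j = fpred l then 1 else if ρ j = l then -1 else 0

lemma aux_sum_s17 (A : ℕ → ℝ) (m x : ℕ) (h0 : A 0 = 0) (h1 : A (m+1) = 0) (hx : x ≤ m) :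
    ∑ l ∈ Finset.range m, A (l+1) * (if x = l then 1 else if x = l+1 then -1 else 0)
      = A (x+1) - A x := by
  have e : ∀ l ∈ Finset.range m, A (l+1) * (if x = l then 1 else if x = l+1 then -1 else 0)
      = (if x = l then A (l+1) else 0) - (if x = l+1 then A (l+1) else 0) := by
    intro l _
    by_cases h : x = l
    · simp [h]
    · by_cases h' : x = l + 1 <;> simp [h, h']
  rw [Finset.sum_congr rfl e, Finset.sum_sub_distrib]
  congr 1
  · rw [Finset.sum_ite_eq]
    split_ifs with h
    · rfl
    · have : x = m := by simp at h; omega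
      rw [this, h1]
  · cases x with
    | zero => simp [h0]
    | succ y =>
      simp only [Nat.add_right_cancel_iff]
      rw [Finset.sum_ite_eq, if_pos (by simp; omega)]

/-- single-site functions -/
def ww {d : ℕ} (l x : Fin d) : ℝ :=
  if (l : ℕ) = 0 then 1 else if x = fpred l then 1 else if x = l then -1 else 0

/-- coefficients -/
def bb {d : ℕ} (s l : Fin d) : ℝ :=
  if (l : ℕ) = 0 then 1 / d else (if (s : ℕ) < l then 1 else 0) - (l : ℝ) / d

lemma aux_delta {d : ℕ} (hd : 2 ≤ d) (s x : Fin d) :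
    (if x = s then (1 : ℝ) else 0) = ∑ l, bb s l * ww l x := by
  obtain ⟨m, rfl⟩ : ∃ m, d = m + 1 := ⟨d - 1, by omega⟩
  have hm : ((m + 1 : ℕ) : ℝ) ≠ 0 := by positivity
  rw [Fin.sum_univ_succ]
  have e : ∀ l : Fin m, bb s l.succ * ww l.succ x =
      (fun l : ℕ => (fun k : ℕ => (if (s : ℕ) < k then (1 : ℝ) else 0) - (k : ℝ) / (m + 1 : ℕ)) (l+1)
        * (if (x : ℕ) = l then (1 : ℝ) else if (x : ℕ) = l+1 then -1 else 0)) l := by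
    intro l
    simp [bb, ww, fpred, Fin.ext_iff]
  rw [Finset.sum_congr rfl (fun l _ => e l), Fin.sum_univ_eq_sum_range
    (fun l : ℕ => (fun k : ℕ => (if (s : ℕ) < k then (1 : ℝ) else 0) - (k : ℝ) / (m + 1 : ℕ)) (l+1)
        * (if (x : ℕ) = l then (1 : ℝ) else if (x : ℕ) = l+1 then -1 else 0)) m]
  rw [aux_sum_s17 (fun k : ℕ => (if (s : ℕ) < k then (1 : ℝ) else 0) - (k : ℝ) / (m + 1 : ℕ)) m x (by simp) (by simp only [s.isLt, if_true]; rw [div_self hm]; simp) (by omega)]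
  have h0 : bb s 0 * ww 0 x = 1 / ((m + 1 : ℕ) : ℝ) := by simp [bb, ww]
  rw [h0]
  rw [Nat.cast_succ (x : ℕ), add_div]
  have h3 : (x = s) ↔ ((x : ℕ) = s) := Fin.ext_iff
  rcases lt_trichotomy (x : ℕ) s with h | h | h
  · rw [if_neg (by omega), if_neg (by omega), if_neg (by omega)]; ring
  · rw [if_pos (by omega), if_pos (by omega), if_neg (by omega)]; ring
  · rw [if_neg (by omega), if_pos (by omega), if_pos (by omega)]; ring

lemma aux_prod (n d : ℕ) (t : ℕ) (js : Fin t → Fin n) (ls : Fin t → Fin d)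
    (hl : ∀ r, 1 ≤ (ls r : ℕ)) :
    (List.ofFn fun r => Zld n d (js r) (ls r)).prod =
      Matrix.diagonal fun ρ => ((∏ r, ww (ls r) (ρ (js r)) : ℝ) : ℂ) := by
  have e : (fun r => Zld n d (js r) (ls r)) = fun r => Matrix.diagonalRingHom _ ℂ
      (fun ρ => ((ww (ls r) (ρ (js r)) : ℝ) : ℂ)) := by
    funext r
    have := hl r
    simp only [Zld, Matrix.diagonalRingHom_apply]
    congr 1
    funext ρ
    have h0 : ¬ ((ls r : ℕ) = 0) := by omega
    rw [ww, if_neg h0]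
    split_ifs <;> simp
  rw [e, ← Function.comp_def (Matrix.diagonalRingHom _ ℂ), ← List.map_ofFn,
    ← map_list_prod, List.prod_ofFn, Matrix.diagonalRingHom_apply]
  congr 1
  funext ρ
  simp

lemma aux_mem_s17 (n d : ℕ) (L : Fin n → Fin d) (hL : ∃ j, (L j : ℕ) ≠ 0) :
    ∃ (t : ℕ) (_ : 1 ≤ t) (_ : t ≤ n) (js : Fin t → Fin n) (ls : Fin t → Fin d),
            StrictMono js ∧ (∀ r, 1 ≤ (ls r : ℕ)) ∧
            (Matrix.diagonal fun ρ : Fin n → Fin d => ((∏ j, ww (L j) (ρ j) : ℝ) : ℂ))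
              = (List.ofFn fun r => Zld n d (js r) (ls r)).prod := by
  set s : Finset (Fin n) := Finset.univ.filter fun j => (L j : ℕ) ≠ 0 with hs
  have hl : ∀ r, 1 ≤ (L (s.orderEmbOfFin rfl r) : ℕ) := by
    intro r
    have := s.orderEmbOfFin_mem rfl r
    simp only [hs, Finset.mem_filter] at this
    exact Nat.one_le_iff_ne_zero.mpr this.2
  refine ⟨s.card, ?_, ?_, s.orderEmbOfFin rfl, fun r => L (s.orderEmbOfFin rfl r),
    (s.orderEmbOfFin rfl).strictMono, hl, ?_⟩
  · obtain ⟨j, hj⟩ := hL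
    exact Finset.card_pos.mpr ⟨j, by simp [hs, hj]⟩
  · simpa using s.card_le_univ
  · rw [aux_prod _ _ _ _ _ hl]
    congr 1
    funext ρ
    congr 1
    have h1 : ∏ j, ww (L j) (ρ j) = ∏ j ∈ s, ww (L j) (ρ j) := by
      symm
      apply Finset.prod_subset (Finset.subset_univ _)
      intro j _ hj
      have : (L j : ℕ) = 0 := by simpa [hs] using hj
      simp [ww, this]
    rw [h1]
    conv_lhs => rw [← Finset.image_orderEmbOfFin_univ s rfl]
    rw [Finset.prod_image (fun a _ b _ h => (s.orderEmbOfFin rfl).injective h)]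

theorem stmt17 (n d : ℕ) (hn : 1 ≤ n) (hd : 2 ≤ d) (h : (Fin n → Fin d) → ℝ) :
    ∃ D ∈ Submodule.span ℝ
        {M : Matrix (Fin n → Fin d) (Fin n → Fin d) ℂ |
          ∃ (t : ℕ) (_ : 1 ≤ t) (_ : t ≤ n) (js : Fin t → Fin n) (ls : Fin t → Fin d),
            StrictMono js ∧ (∀ r, 1 ≤ (ls r : ℕ)) ∧
            M = (List.ofFn fun r => Zld n d (js r) (ls r)).prod},
      Matrix.diagonal (fun ρ => (h ρ : ℂ)) =
        ((Matrix.diagonal fun ρ => (h ρ : ℂ)).trace / (d : ℂ) ^ n) •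
            (1 : Matrix (Fin n → Fin d) (Fin n → Fin d) ℂ) + D := by
  have hd0 : 0 < d := by omega
  set L0 : Fin n → Fin d := fun _ => ⟨0, hd0⟩ with hL0
  set B : (Fin n → Fin d) → ℝ := fun L => ∑ σ, h σ * ∏ j, bb (σ j) (L j) with hB
  have key : ∀ ρ, h ρ = ∑ L, B L * ∏ j, ww (L j) (ρ j) := by
    intro ρ
    have h1 : ∀ σ : Fin n → Fin d, (if ρ = σ then (1 : ℝ) else 0) =
        ∑ L : Fin n → Fin d, (∏ j, bb (σ j) (L j)) * ∏ j, ww (L j) (ρ j) := by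
      intro σ
      have h2 : (if ρ = σ then (1 : ℝ) else 0) = ∏ j, (if ρ j = σ j then (1 : ℝ) else 0) := by
        rw [Finset.prod_ite_zero]
        simp [funext_iff]
      rw [h2, Finset.prod_congr rfl (fun j _ => aux_delta hd (σ j) (ρ j)),
        Finset.prod_univ_sum, Fintype.piFinset_univ]
      simp only [Finset.prod_mul_distrib]
    calc h ρ = ∑ σ, h σ * (if ρ = σ then (1 : ℝ) else 0) := by simp
      _ = _ := by
        simp only [h1, hB, Finset.mul_sum, Finset.sum_mul]
        rw [Finset.sum_comm]
        simp only [mul_assoc]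
  refine ⟨∑ L ∈ Finset.univ.erase L0, B L •
    (Matrix.diagonal fun ρ : Fin n → Fin d => ((∏ j, ww (L j) (ρ j) : ℝ) : ℂ)), ?_, ?_⟩
  · refine Submodule.sum_mem _ fun L hL => Submodule.smul_mem _ _ (Submodule.subset_span ?_)
    apply aux_mem_s17
    by_contra hc
    push Not at hc
    exact Finset.ne_of_mem_erase hL (funext fun j => Fin.ext (hc j))
  · have hB0 : ((Matrix.diagonal fun ρ => (h ρ : ℂ)).trace / (d : ℂ) ^ n) = ((B L0 : ℝ) : ℂ) := by
      simp [hB, hL0, bb, Matrix.trace_diagonal, Finset.sum_mul, div_eq_mul_inv]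
    have h1 : (1 : Matrix (Fin n → Fin d) (Fin n → Fin d) ℂ) =
        Matrix.diagonal fun ρ : Fin n → Fin d => ((∏ j, ww (L0 j) (ρ j) : ℝ) : ℂ) := by
      simp [hL0, ww]
    rw [hB0, h1, Complex.coe_smul, Finset.add_sum_erase _ (fun L => B L •
      (Matrix.diagonal fun ρ : Fin n → Fin d => ((∏ j, ww (L j) (ρ j) : ℝ) : ℂ))) (Finset.mem_univ L0)]
    ext ρ τ
    rw [Matrix.sum_apply]
    by_cases hr : ρ = τ
    · subst hr
      simp only [Matrix.diagonal_apply_eq, Matrix.smul_apply, Complex.real_smul]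
      rw [key ρ]
      push_cast
      rfl
    · simp [Matrix.diagonal_apply_ne _ hr]

end
end

section
/- Let G be a finite group, d ≥ 1, and u : G →* (Matrix (Fin d) (Fin d) ℂ)ˣ a representation with every u g unitary; let U_n g denote the n-fold tensor power of u g on the index type (Fin n → Fin d). Let ι be a finite index type and suppose H = Σ_{j ∈ ι} h_j where each h_j is k-local, and H commutes with U_n g for every g ∈ G. Define h̃_j := (1/|G|) • Σ_{g ∈ G} (U_n g) * h_j * (U_n g)⁻¹. Then each h̃_j is k-local, each h̃_j commutes with U_n g for every g, and H = Σ_{j ∈ ι} h̃_j. (Any G-invariant Hamiltonian that is a sum of k-local terms is also a sum of k-local G-invariant terms.) -/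
/-! STATEMENT 19: Twirling: any `G`-invariant Hamiltonian that is a sum of `k`-local terms
is also a sum of `k`-local `G`-invariant terms, obtained by group-averaging each term. -/

open Matrix

/-- The `m`-fold tensor power of the single-site representation `u`:
`(U_m g) x y = ∏_j (u g) (x j) (y j)`. -/
noncomputable def Un (G : Type) [Group G] (d : ℕ) (u : G →* (Matrix (Fin d) (Fin d) ℂ)ˣ)
    (m : ℕ) (g : G) : Matrix (Fin m → Fin d) (Fin m → Fin d) ℂ :=
  fun x y => ∏ j, (u g : Matrix (Fin d) (Fin d) ℂ) (x j) (y j)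

/-- The twirl `h̃ = (1/|G|) Σ_g (U_n g) h (U_n g)⁻¹` of a matrix over a finite group. -/
noncomputable def twirl (G : Type) [Group G] [Fintype G] (d n : ℕ)
    (u : G →* (Matrix (Fin d) (Fin d) ℂ)ˣ)
    (A : Matrix (Fin n → Fin d) (Fin n → Fin d) ℂ) :
    Matrix (Fin n → Fin d) (Fin n → Fin d) ℂ :=
  ((1 : ℂ) / (Fintype.card G : ℂ)) • ∑ g : G, Un G d u n g * A * (Un G d u n g)⁻¹


/-- Tensor product of single-site matrices. -/
noncomputable def AuxT {n d : ℕ} (M : Fin n → Matrix (Fin d) (Fin d) ℂ) :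
    Matrix (Fin n → Fin d) (Fin n → Fin d) ℂ :=
  Matrix.of fun x y => ∏ j, M j (x j) (y j)

theorem aux_T_apply {n d : ℕ} (M : Fin n → Matrix (Fin d) (Fin d) ℂ) (x y : Fin n → Fin d) :
    AuxT M x y = ∏ j, M j (x j) (y j) := rfl

theorem aux_pi_mul {n d : ℕ} (M N : Fin n → Matrix (Fin d) (Fin d) ℂ) :
    AuxT M * AuxT N = AuxT (fun j => M j * N j) := by
  ext x y
  simp only [Matrix.mul_apply, aux_T_apply]
  rw [Finset.prod_univ_sum]
  simp [Finset.prod_mul_distrib]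

theorem aux_Un_eq {G : Type} [Group G] {d n : ℕ} (u : G →* (Matrix (Fin d) (Fin d) ℂ)ˣ)
    (g : G) : Un G d u n g = AuxT (fun _ => (u g : Matrix (Fin d) (Fin d) ℂ)) := rfl

theorem aux_Un_mul {G : Type} [Group G] {d n : ℕ} (u : G →* (Matrix (Fin d) (Fin d) ℂ)ˣ)
    (g k : G) : Un G d u n (g * k) = Un G d u n g * Un G d u n k := by
  rw [aux_Un_eq, aux_Un_eq, aux_Un_eq, aux_pi_mul, map_mul, Units.val_mul]

theorem aux_Un_one {G : Type} [Group G] {d n : ℕ} (u : G →* (Matrix (Fin d) (Fin d) ℂ)ˣ) :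
    Un G d u n 1 = 1 := by
  ext x y
  simp only [Un, map_one, Units.val_one, Matrix.one_apply]
  rw [Finset.prod_ite_zero]
  simp [funext_iff]

theorem aux_Un_inv {G : Type} [Group G] {d n : ℕ} (u : G →* (Matrix (Fin d) (Fin d) ℂ)ˣ)
    (g : G) : (Un G d u n g)⁻¹ = Un G d u n g⁻¹ := by
  apply Matrix.inv_eq_right_inv
  rw [← aux_Un_mul, mul_inv_cancel, aux_Un_one]

/-- Locality on a fixed set of sites. -/
def AuxLoc {n d : ℕ} (S : Finset (Fin n)) (A : Matrix (Fin n → Fin d) (Fin n → Fin d) ℂ) : Prop :=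
    (∀ x y, (∃ j, j ∉ S ∧ x j ≠ y j) → A x y = 0) ∧
    (∀ x y x' y' : Fin n → Fin d,
      (∀ j ∈ S, x j = x' j) → (∀ j ∈ S, y j = y' j) →
      (∀ j ∉ S, x j = y j) → (∀ j ∉ S, x' j = y' j) → A x y = A x' y')

theorem aux_loc_smul {n d : ℕ} {S : Finset (Fin n)}
    {A : Matrix (Fin n → Fin d) (Fin n → Fin d) ℂ} (c : ℂ) (hA : AuxLoc S A) :
    AuxLoc S (c • A) := by
  refine ⟨fun x y hxy => ?_, fun x y x' y' h1 h2 h3 h4 => ?_⟩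
  · simp [hA.1 x y hxy]
  · simp [hA.2 x y x' y' h1 h2 h3 h4]

theorem aux_loc_sum {n d : ℕ} {S : Finset (Fin n)} {κ : Type*} (s : Finset κ)
    {A : κ → Matrix (Fin n → Fin d) (Fin n → Fin d) ℂ} (hA : ∀ i, AuxLoc S (A i)) :
    AuxLoc S (∑ i ∈ s, A i) := by
  refine ⟨fun x y hxy => ?_, fun x y x' y' h1 h2 h3 h4 => ?_⟩
  · simp only [Matrix.sum_apply]
    exact Finset.sum_eq_zero fun i _ => (hA i).1 x y hxy
  · simp only [Matrix.sum_apply]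
    exact Finset.sum_congr rfl fun i _ => (hA i).2 x y x' y' h1 h2 h3 h4

theorem aux_loc_pi {n d : ℕ} {S : Finset (Fin n)} (M : Fin n → Matrix (Fin d) (Fin d) ℂ)
    (hM : ∀ j ∉ S, M j = 1) :
    AuxLoc S (AuxT M) := by
  refine ⟨fun x y hxy => ?_, fun x y x' y' h1 h2 h3 h4 => ?_⟩
  · obtain ⟨j, hj, hne⟩ := hxy
    rw [aux_T_apply]
    refine Finset.prod_eq_zero (Finset.mem_univ j) ?_
    rw [hM j hj, Matrix.one_apply_ne hne]
  · rw [aux_T_apply, aux_T_apply]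
    refine Finset.prod_congr rfl fun j _ => ?_
    by_cases hj : j ∈ S
    · rw [h1 j hj, h2 j hj]
    · rw [hM j hj, h3 j hj, h4 j hj]; simp

open Classical in
theorem aux_decomp {n d : ℕ} (hd : 1 ≤ d) {S : Finset (Fin n)}
    {A : Matrix (Fin n → Fin d) (Fin n → Fin d) ℂ} (hA : AuxLoc S A) :
    ∃ c : (Fin n → Fin d) → (Fin n → Fin d) → ℂ,
      A = ∑ p, ∑ q, c p q • AuxT (fun j => if j ∈ S then Matrix.single (p j) (q j) (1 : ℂ) else 1) := by
  let z : Fin d := ⟨0, hd⟩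
  refine ⟨fun p q => if ∀ j ∉ S, p j = z ∧ q j = z then A p q else 0, ?_⟩
  ext a b
  simp only [Matrix.sum_apply, Matrix.smul_apply, smul_eq_mul, aux_T_apply]
  by_cases hab : ∃ j, j ∉ S ∧ a j ≠ b j
  · rw [hA.1 a b hab]
    obtain ⟨j, hj, hne⟩ := hab
    symm
    refine Finset.sum_eq_zero fun p _ => Finset.sum_eq_zero fun q _ => ?_
    refine mul_eq_zero_of_right _ (Finset.prod_eq_zero (Finset.mem_univ j) ?_)
    simp [hj, hne]
  · push Not at hab
    have key : ∀ p q : Fin n → Fin d, (p ≠ (fun j => if j ∈ S then a j else z) ∨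
        q ≠ (fun j => if j ∈ S then b j else z)) →
        (if ∀ j ∉ S, p j = z ∧ q j = z then A p q else 0) *
        ∏ j, (if j ∈ S then Matrix.single (p j) (q j) (1 : ℂ) else 1 :
        Matrix (Fin d) (Fin d) ℂ) (a j) (b j) = 0 := by
      intro p q hpq
      by_cases hz : ∀ j ∉ S, p j = z ∧ q j = z
      · apply mul_eq_zero_of_right
        have : ∃ j ∈ S, ¬ (p j = a j ∧ q j = b j) := by
          by_contra! hcon
          rcases hpq with h | h
          · apply h; funext j
            by_cases hj : j ∈ S
            · simp [hj, (hcon j hj).1]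
            · simp [hj, (hz j hj).1]
          · apply h; funext j
            by_cases hj : j ∈ S
            · simp [hj, (hcon j hj).2]
            · simp [hj, (hz j hj).2]
        obtain ⟨j, hj, hne⟩ := this
        refine Finset.prod_eq_zero (Finset.mem_univ j) ?_
        rw [if_pos hj, Matrix.single_apply, if_neg hne]
      · rw [if_neg hz, zero_mul]
    rw [Finset.sum_eq_single (fun j => if j ∈ S then a j else z),
      Finset.sum_eq_single (fun j => if j ∈ S then b j else z)]
    · rw [if_pos (by intro j hj; simp [hj]), Finset.prod_eq_one, mul_one]
      · apply hA.2
        · intro j hj; simp [hj]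
        · intro j hj; simp [hj]
        · exact hab
        · intro j hj; simp [hj]
      · intro j _
        by_cases hj : j ∈ S
        · simp [hj]
        · rw [if_neg hj, hab j hj, Matrix.one_apply_eq]
    · intro q _ hq; exact key _ _ (Or.inr hq)
    · simp
    · intro p _ hp
      exact Finset.sum_eq_zero fun q _ => key _ _ (Or.inl hp)
    · simp

theorem aux_conj {G : Type} [Group G] {d n : ℕ} (hd : 1 ≤ d)
    (u : G →* (Matrix (Fin d) (Fin d) ℂ)ˣ) (g : G) {S : Finset (Fin n)}
    {A : Matrix (Fin n → Fin d) (Fin n → Fin d) ℂ} (hA : AuxLoc S A) :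
    AuxLoc S (Un G d u n g * A * Un G d u n g⁻¹) := by
  obtain ⟨c, hc⟩ := aux_decomp hd hA
  rw [hc]
  simp only [Finset.mul_sum, Finset.sum_mul, Matrix.mul_smul, Matrix.smul_mul]
  refine aux_loc_sum _ fun p => aux_loc_sum _ fun q => aux_loc_smul _ ?_
  rw [aux_Un_eq, aux_Un_eq, aux_pi_mul, aux_pi_mul]
  refine aux_loc_pi _ fun j hj => ?_
  rw [if_neg hj, mul_one, ← Units.val_mul, ← map_mul, mul_inv_cancel, map_one, Units.val_one]

theorem stmt19 (G : Type) [Group G] [Fintype G] (d n k : ℕ) (hd : 1 ≤ d)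
    (u : G →* (Matrix (Fin d) (Fin d) ℂ)ˣ)
    (hu : ∀ g, (u g : Matrix (Fin d) (Fin d) ℂ) * (u g : Matrix (Fin d) (Fin d) ℂ)ᴴ = 1)
    (ι : Type) [Fintype ι]
    (h : ι → Matrix (Fin n → Fin d) (Fin n → Fin d) ℂ)
    (hloc : ∀ j, IsKLocal n d k (h j))
    (hinv : ∀ g : G, (∑ j, h j) * Un G d u n g = Un G d u n g * (∑ j, h j)) :
    (∀ j, IsKLocal n d k (twirl G d n u (h j))) ∧
    (∀ j (g : G), twirl G d n u (h j) * Un G d u n g = Un G d u n g * twirl G d n u (h j)) ∧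
    (∑ j, h j) = ∑ j, twirl G d n u (h j) := by
  have tw : ∀ A, twirl G d n u A =
      ((1 : ℂ) / (Fintype.card G : ℂ)) • ∑ g : G, Un G d u n g * A * Un G d u n g⁻¹ := by
    intro A
    simp only [twirl, aux_Un_inv]
  refine ⟨fun j => ?_, fun j g => ?_, ?_⟩
  · obtain ⟨S, hS, hl⟩ := hloc j
    refine ⟨S, hS, ?_⟩
    rw [tw]
    exact aux_loc_smul _ (aux_loc_sum _ fun g => aux_conj hd u g hl)
  · rw [tw, Matrix.smul_mul, Matrix.mul_smul, Finset.sum_mul, Finset.mul_sum]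
    congr 1
    rw [← Equiv.sum_comp (Equiv.mulLeft g)]
    refine Finset.sum_congr rfl fun k _ => ?_
    have e : Un G d u n (g * k)⁻¹ * Un G d u n g = Un G d u n k⁻¹ := by
      rw [← aux_Un_mul]; congr 1; group
    rw [Equiv.coe_mulLeft, mul_assoc, e, aux_Un_mul]
    simp only [mul_assoc]
  · simp only [tw]
    rw [← Finset.smul_sum, Finset.sum_comm]
    have e : ∀ g : G, ∑ j, Un G d u n g * h j * Un G d u n g⁻¹ = ∑ j, h j := by
      intro g
      rw [← Finset.sum_mul, ← Finset.mul_sum, ← hinv, mul_assoc, ← aux_Un_mul,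
        mul_inv_cancel, aux_Un_one, mul_one]
    simp only [e, Finset.sum_const, Finset.card_univ]
    rw [← Nat.cast_smul_eq_nsmul ℂ, smul_smul, one_div, inv_mul_cancel₀, one_smul]
    exact_mod_cast Fintype.card_ne_zero
end
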